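/- arXiv:1405.7542 — 2 statements merged into one kernel-verified Lean document; each statement's English description precedes it below -/
import Mathlib

section
/- The function (x, ρ) ↦ e^{-xᵀKx} · φ_m(ρ) · e^{iρ · P̃(x)^{1/(2m)}} is Lebesgue integrable (absolutely integrable) on ℝ^N × ℝ; indeed its absolute value is bounded by C · exp(−|ρ|^{1+1/(2m)} − xᵀKx) for some constant C > 0. -/
open MeasureTheory Matrix

/-- The Fourier transform `φ_m(ρ) := (1/(2π)) ∫_ℝ e^{-iρr} e^{-r^{2m}} dr`. -/
noncomputable def phiFT (m : ℕ) (ρ : ℝ) : ℂ :=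
  (1 / (2 * Real.pi)) *
    ∫ r : ℝ, Complex.exp (-(Complex.I * (ρ : ℂ) * (r : ℂ))) * (Real.exp (-(r ^ (2 * m))) : ℂ)


lemma aux_pow (z r : ℂ) (n : ℕ) :
    ‖(r + z)^n - r^n‖ ≤ (‖r‖+‖z‖)^n - ‖r‖^n := by
  induction n with
  | zero => simp
  | succ n ih =>
    have h : (r+z)^(n+1) - r^(n+1) = ((r+z)^n - r^n)*(r+z) + r^n*z := by ring
    rw [h]
    calc _ ≤ ‖(r+z)^n - r^n‖*‖r+z‖ + ‖r‖^n*‖z‖ := by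
            refine (norm_add_le _ _).trans ?_
            simp
      _ ≤ ((‖r‖+‖z‖)^n - ‖r‖^n) * (‖r‖+‖z‖) + ‖r‖^n*‖z‖ := by
            gcongr
            · exact (norm_nonneg _).trans ih
            · exact norm_add_le _ _
      _ = _ := by ring

lemma aux_re (m : ℕ) : ∃ C : ℝ, 0 ≤ C ∧ ∀ r η : ℝ,
    r^(2*m)/2 - C * η^(2*m) ≤ (((r:ℂ) + η * Complex.I)^(2*m)).re := by
  obtain ⟨δ, hδ, hδ1⟩ : ∃ δ : ℝ, 0 < δ ∧ (1+δ)^(2*m) ≤ 3/2 := by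
    have hc : Filter.Tendsto (fun δ : ℝ => (1+δ)^(2*m)) (nhdsWithin 0 (Set.Ioi 0)) (nhds 1) := by
      have : Continuous (fun δ : ℝ => (1+δ)^(2*m)) := by fun_prop
      have h := this.tendsto 0
      simp only [add_zero, one_pow] at h
      exact h.mono_left nhdsWithin_le_nhds
    have h1 := hc.eventually (eventually_le_nhds (show (1:ℝ) < 3/2 by norm_num))
    obtain ⟨δ, h, h'⟩ := (h1.and self_mem_nhdsWithin).exists
    exact ⟨δ, h', h⟩
  refine ⟨(1/δ+1)^(2*m) + (1/δ)^(2*m), by positivity, fun r η => ?_⟩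
  have hr : r^(2*m) = |r|^(2*m) := (Even.pow_abs (even_two_mul m) r).symm
  have hη : η^(2*m) = |η|^(2*m) := (Even.pow_abs (even_two_mul m) η).symm
  by_cases h : |η| ≤ δ * |r|
  · have h1 := aux_pow (η * Complex.I) r (2*m)
    simp only [norm_mul, Complex.norm_I, mul_one, Complex.norm_real, Real.norm_eq_abs] at h1
    have h2 : (|r| + |η|)^(2*m) ≤ 3/2 * |r|^(2*m) := by
      calc (|r| + |η|)^(2*m) ≤ ((1+δ) * |r|)^(2*m) := by gcongr; linarith
        _ = (1+δ)^(2*m) * |r|^(2*m) := mul_pow _ _ _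
        _ ≤ _ := by gcongr
    have h3 := (Complex.abs_re_le_norm _).trans h1
    rw [Complex.sub_re, ← Complex.ofReal_pow, Complex.ofReal_re] at h3
    have h4 := (abs_le.1 h3).1
    have h5 : 0 ≤ ((1/δ+1)^(2*m) + (1/δ)^(2*m)) * |η|^(2*m) := by positivity
    rw [hr] at *
    rw [hη]
    linarith
  · push Not at h
    have hle : |r| ≤ 1/δ * |η| := by
      rw [one_div, inv_mul_eq_div, le_div_iff₀ hδ]; linarith
    have h1 : ‖((r:ℂ) + η * Complex.I)^(2*m)‖ ≤ (1/δ+1)^(2*m) * |η|^(2*m) := by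
      rw [norm_pow, ← mul_pow]
      gcongr
      refine (norm_add_le _ _).trans ?_
      simp only [norm_mul, Complex.norm_I, mul_one, Complex.norm_real, Real.norm_eq_abs]
      linarith
    have h2 := (abs_le.1 ((Complex.abs_re_le_norm _).trans h1)).1
    have h3 : |r|^(2*m) ≤ (1/δ)^(2*m) * |η|^(2*m) := by
      rw [← mul_pow]; gcongr
    have h4 : 0 ≤ |r|^(2*m) := by positivity
    rw [hr, hη]
    linarith

lemma aux_int (m : ℕ) (hm : 0 < m) : Integrable (fun r : ℝ => Real.exp (-(r^(2*m)/2))) := by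
  have h := (integrable_exp_neg_mul_sq (b := 1/2) (by norm_num)).const_mul (Real.exp (1/2))
  refine h.mono' (by fun_prop) (Filter.Eventually.of_forall fun r => ?_)
  rw [Real.norm_eq_abs, abs_of_pos (Real.exp_pos _), ← Real.exp_add]
  apply Real.exp_le_exp.2
  have : r^2 - 1 ≤ r^(2*m) := by
    rw [pow_mul]
    by_cases h : 1 ≤ r^2
    · have := le_self_pow₀ h hm.ne'
      linarith
    · have : 0 ≤ (r^2)^m := by positivity
      linarith
  linarith

lemma aux_young (m : ℕ) (C : ℝ) (hC : 0 ≤ C) (hm : 0 < m) : ∃ D : ℝ, ∀ t : ℝ, 0 ≤ t →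
    C * t ≤ t^(1 + 1/(2*(m:ℝ))) + D := by
  have hm' : (0:ℝ) < m := by exact_mod_cast hm
  refine ⟨C * C^(2*(m:ℝ)), fun t ht => ?_⟩
  have hs : t^(1 + 1/(2*(m:ℝ))) = t * t^(1/(2*(m:ℝ))) := by
    rw [Real.rpow_add' ht (by positivity), Real.rpow_one]
  rw [hs]
  by_cases h : C ≤ t^(1/(2*(m:ℝ)))
  · have : 0 ≤ C * C^(2*(m:ℝ)) := by positivity
    have := mul_le_mul_of_nonneg_left h ht
    linarith
  · push Not at h
    have : t ≤ C^(2*(m:ℝ)) := by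
      have := Real.rpow_le_rpow (by positivity) h.le (show 0 ≤ 2*(m:ℝ) by positivity)
      rwa [← Real.rpow_mul ht, one_div_mul_cancel (by positivity), Real.rpow_one] at this
    have := mul_le_mul_of_nonneg_left this hC
    have : 0 ≤ t * t^(1/(2*(m:ℝ))) := by positivity
    linarith

lemma aux_quad (N : ℕ) (K : Matrix (Fin N) (Fin N) ℝ) (hK : K.PosDef) :
    ∃ c > 0, ∀ x : Fin N → ℝ, c * ‖x‖^2 ≤ x ⬝ᵥ K *ᵥ x := by
  have hcont : Continuous (fun x : Fin N → ℝ => x ⬝ᵥ K *ᵥ x) := by fun_prop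
  have hpos : ∀ x : Fin N → ℝ, x ≠ 0 → 0 < x ⬝ᵥ K *ᵥ x := fun x hx => by
    have := hK.dotProduct_mulVec_pos hx
    simpa using this
  obtain ⟨c, hc, h⟩ : ∃ c > 0, ∀ x ∈ Metric.sphere (0 : Fin N → ℝ) 1, c ≤ x ⬝ᵥ K *ᵥ x := by
    rcases (Metric.sphere (0 : Fin N → ℝ) 1).eq_empty_or_nonempty with he | hne
    · exact ⟨1, one_pos, by simp [he]⟩
    · obtain ⟨x, hx, hmin⟩ := (isCompact_sphere (0 : Fin N → ℝ) 1).exists_isMinOn hne hcont.continuousOn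
      refine ⟨_, hpos x ?_, fun y hy => hmin hy⟩
      rintro rfl
      simp at hx
  refine ⟨c, hc, fun x => ?_⟩
  by_cases hx : x = 0
  · simp [hx]
  have hn : 0 < ‖x‖ := norm_pos_iff.2 hx
  have h1 := h (‖x‖⁻¹ • x) (by simp [norm_smul, hn.ne'])
  rw [Matrix.mulVec_smul, dotProduct_smul, smul_dotProduct, smul_eq_mul, smul_eq_mul] at h1
  have := mul_le_mul_of_nonneg_right h1 (sq_nonneg ‖x‖)
  refine this.trans_eq ?_
  field_simp

lemma aux_quad_int (N : ℕ) (hN : 0 < N) (K : Matrix (Fin N) (Fin N) ℝ) (hK : K.PosDef) :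
    Integrable (fun x : Fin N → ℝ => Real.exp (-(x ⬝ᵥ K *ᵥ x))) := by
  obtain ⟨c, hc, h⟩ := aux_quad N K hK
  have hN' : (0:ℝ) < N := by exact_mod_cast hN
  have h1 : Integrable (fun x : Fin N → ℝ => ∏ i, Real.exp (-(c/N) * x i^2)) :=
    Integrable.fintype_prod (f := fun _ (y : ℝ) => Real.exp (-(c/N) * y^2))
      fun i => integrable_exp_neg_mul_sq (by positivity)
  have hcont : Continuous (fun x : Fin N → ℝ => Real.exp (-(x ⬝ᵥ K *ᵥ x))) := by fun_prop
  refine h1.mono' hcont.aestronglyMeasurable (Filter.Eventually.of_forall fun x => ?_)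
  rw [Real.norm_eq_abs, abs_of_pos (Real.exp_pos _), ← Real.exp_sum]
  apply Real.exp_le_exp.2
  rw [← Finset.mul_sum]
  have h2 : ∑ i, x i^2 ≤ N * ‖x‖^2 := by
    calc ∑ i, x i^2 ≤ ∑ i : Fin N, ‖x‖^2 := by
          refine Finset.sum_le_sum fun i _ => ?_
          rw [← sq_abs]
          gcongr
          exact norm_le_pi_norm x i
      _ = _ := by simp
  have h3 := mul_le_mul_of_nonneg_left h2 (show 0 ≤ c/N by positivity)
  have h4 : c/N * (N * ‖x‖^2) = c * ‖x‖^2 := by field_simp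
  have := h x
  linarith

lemma aux_rho_int (a : ℝ) (ha : 1 ≤ a) :
    Integrable (fun t : ℝ => Real.exp (-(|t|^a))) := by
  have h := integrable_inv_one_add_sq.const_mul (2 * Real.exp 1)
  have hcont : Continuous (fun t : ℝ => Real.exp (-(|t|^a))) := by
    have : Continuous (fun t : ℝ => |t|^a) := continuous_abs.rpow_const (fun _ => Or.inr (by linarith))
    fun_prop
  refine h.mono' hcont.aestronglyMeasurable (Filter.Eventually.of_forall fun t => ?_)
  rw [Real.norm_eq_abs, abs_of_pos (Real.exp_pos _)]
  have h1 : Real.exp (-(|t|^a)) ≤ Real.exp 1 * Real.exp (-|t|) := by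
    rw [← Real.exp_add]
    apply Real.exp_le_exp.2
    by_cases h : 1 ≤ |t|
    · have := Real.self_le_rpow_of_one_le h ha
      linarith
    · have : 0 ≤ |t|^a := by positivity
      linarith
  have h2 : Real.exp (-|t|) ≤ 2 * (1 + t^2)⁻¹ := by
    rw [Real.exp_neg, ← div_eq_mul_inv, inv_le_comm₀ (Real.exp_pos _) (by positivity), inv_div]
    have := Real.quadratic_le_exp_of_nonneg (abs_nonneg t)
    rw [sq_abs] at this
    have := abs_nonneg t
    linarith
  calc _ ≤ _ := h1
    _ ≤ Real.exp 1 * (2 * (1 + t^2)⁻¹) := by gcongr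
    _ = _ := by ring

noncomputable def auxG (m : ℕ) (ρ : ℝ) (z : ℂ) : ℂ :=
  Complex.exp (-(Complex.I * (ρ : ℂ) * z)) * Complex.exp (-(z ^ (2 * m)))

lemma auxG_norm (m : ℕ) (C : ℝ) (hC : ∀ r η : ℝ,
    r^(2*m)/2 - C * η^(2*m) ≤ (((r:ℂ) + η * Complex.I)^(2*m)).re) (ρ r η : ℝ) :
    ‖auxG m ρ ((r:ℂ) + η * Complex.I)‖ ≤
      Real.exp (ρ * η + C * η^(2*m)) * Real.exp (-(r^(2*m)/2)) := by
  unfold auxG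
  rw [norm_mul, Complex.norm_exp, Complex.norm_exp, ← Real.exp_add, ← Real.exp_add]
  apply Real.exp_le_exp.2
  have h1 : (-(Complex.I * (ρ : ℂ) * ((r:ℂ) + η * Complex.I))).re = ρ * η := by
    simp
  rw [h1, Complex.neg_re]
  have := hC r η
  linarith

lemma auxG_cont (m : ℕ) (ρ : ℝ) : Continuous (auxG m ρ) := by
  unfold auxG; fun_prop

lemma auxG_int (m : ℕ) (hm : 0 < m) (ρ η : ℝ) :
    Integrable (fun r : ℝ => auxG m ρ ((r:ℂ) + η * Complex.I)) := by
  obtain ⟨C, -, hC⟩ := aux_re m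
  refine ((aux_int m hm).const_mul _).mono' ?_
    (Filter.Eventually.of_forall fun r => auxG_norm m C hC ρ r η)
  exact ((auxG_cont m ρ).comp (by fun_prop)).aestronglyMeasurable

lemma auxG_vert (m : ℕ) (hm : 0 < m) (ρ η : ℝ) (s : ℝ) (hs : |s| = 1) :
    Filter.Tendsto (fun T : ℝ => ∫ y : ℝ in (0:ℝ)..η, auxG m ρ (((s * T : ℝ) : ℂ) + y * Complex.I))
      Filter.atTop (nhds 0) := by
  obtain ⟨C, hC0, hC⟩ := aux_re m
  have hb : ∀ T : ℝ, ‖∫ y : ℝ in (0:ℝ)..η, auxG m ρ (((s * T : ℝ) : ℂ) + y * Complex.I)‖ ≤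
      Real.exp (|ρ| * |η| + C * |η|^(2*m)) * Real.exp (-(T^(2*m)/2)) * |η - 0| := by
    intro T
    refine intervalIntegral.norm_integral_le_of_norm_le_const fun y hy => ?_
    refine (auxG_norm m C hC ρ (s*T) y).trans ?_
    have hy' : |y| ≤ |η| := by
      have := Set.uIoc_subset_uIcc hy
      have := Set.abs_sub_left_of_mem_uIcc this
      simpa using this
    have h1 : (s*T)^(2*m) = T^(2*m) := by
      rw [← Even.pow_abs (even_two_mul m) (s*T), abs_mul, hs, one_mul,
        Even.pow_abs (even_two_mul m)]
    rw [h1]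
    have h2 : ρ * y ≤ |ρ| * |η| := by
      calc ρ * y ≤ |ρ * y| := le_abs_self _
        _ = |ρ| * |y| := abs_mul _ _
        _ ≤ _ := by gcongr
    have h3 : C * y^(2*m) ≤ C * |η|^(2*m) := by
      rw [← Even.pow_abs (even_two_mul m) y]
      gcongr
    exact mul_le_mul_of_nonneg_right (Real.exp_le_exp.2 (add_le_add h2 h3)) (Real.exp_pos _).le
  refine squeeze_zero_norm hb ?_
  have h1 : Filter.Tendsto (fun T : ℝ => Real.exp (-(T^(2*m)/2))) Filter.atTop (nhds 0) := by
    refine Real.tendsto_exp_neg_atTop_nhds_zero.comp ?_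
    exact (Filter.tendsto_pow_atTop (by omega)).atTop_div_const (by norm_num)
  simpa using (h1.const_mul (Real.exp (|ρ| * |η| + C * |η|^(2*m)))).mul_const |η - 0|

lemma auxG_shift (m : ℕ) (hm : 0 < m) (ρ η : ℝ) :
    ∫ r : ℝ, auxG m ρ (r:ℂ) = ∫ r : ℝ, auxG m ρ ((r:ℂ) + η * Complex.I) := by
  have hd : Differentiable ℂ (auxG m ρ) := by unfold auxG; fun_prop
  have hrect : ∀ T : ℝ, (∫ x : ℝ in (-T)..T, auxG m ρ x)
      - (∫ x : ℝ in (-T)..T, auxG m ρ ((x:ℂ) + η * Complex.I))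
      + Complex.I • (∫ y : ℝ in (0:ℝ)..η, auxG m ρ (((1 * T : ℝ) : ℂ) + y * Complex.I))
      - Complex.I • (∫ y : ℝ in (0:ℝ)..η, auxG m ρ (((-1 * T : ℝ) : ℂ) + y * Complex.I)) = 0 := by
    intro T
    have := Complex.integral_boundary_rect_eq_zero_of_differentiableOn (auxG m ρ) (-(T:ℂ))
      ((T:ℂ) + η * Complex.I) hd.differentiableOn
    simpa using this
  have i0 : Integrable (fun r : ℝ => auxG m ρ (r:ℂ)) := by
    simpa using auxG_int m hm ρ 0
  have t1 := intervalIntegral_tendsto_integral i0 Filter.tendsto_neg_atTop_atBot Filter.tendsto_id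
  have t2 := intervalIntegral_tendsto_integral (auxG_int m hm ρ η)
    Filter.tendsto_neg_atTop_atBot Filter.tendsto_id
  have t3 := (auxG_vert m hm ρ η 1 (by simp)).const_smul Complex.I
  have t4 := (auxG_vert m hm ρ η (-1) (by simp)).const_smul Complex.I
  have t := ((t1.sub t2).add t3).sub t4
  have := tendsto_nhds_unique t (tendsto_const_nhds.congr fun T => (hrect T).symm)
  simpa [sub_eq_zero] using this

lemma phiFT_eq (m : ℕ) (ρ : ℝ) : phiFT m ρ = (1 / (2 * Real.pi)) * ∫ r : ℝ, auxG m ρ (r:ℂ) := by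
  simp [phiFT, auxG]

lemma phiFT_bound (m : ℕ) (hm : 0 < m) : ∃ C > 0, ∀ ρ : ℝ,
    ‖phiFT m ρ‖ ≤ C * Real.exp (-(|ρ| ^ (1 + 1 / (2 * (m : ℝ))))) := by
  obtain ⟨C, hC0, hC⟩ := aux_re m
  obtain ⟨D, hD⟩ := aux_young m (C * 2^(2*m)) (by positivity) hm
  have hm' : (0:ℝ) < m := by exact_mod_cast hm
  set J := ∫ r : ℝ, Real.exp (-(r^(2*m)/2)) with hJ
  have hJ0 : 0 ≤ J := integral_nonneg fun r => (Real.exp_pos _).le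
  refine ⟨‖(1 / (2 * Real.pi) : ℂ)‖ * Real.exp D * J + 1, by positivity, fun ρ => ?_⟩
  obtain ⟨σ, hσ, hσ'⟩ : ∃ σ : ℝ, |σ| = 1 ∧ ρ * σ = -|ρ| := by
    rcases le_total 0 ρ with h | h
    · exact ⟨-1, by simp, by simp [abs_of_nonneg h]⟩
    · exact ⟨1, by simp, by simp [abs_of_nonpos h]⟩
  set t := |ρ| with ht
  have ht0 : 0 ≤ t := abs_nonneg _
  set η := σ * (2 * t^(1/(2*(m:ℝ)))) with hη
  have hs : t^(1 + 1/(2*(m:ℝ))) = t * t^(1/(2*(m:ℝ))) := by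
    rw [Real.rpow_add' ht0 (by positivity), Real.rpow_one]
  have hpow : η^(2*m) = 2^(2*m) * t := by
    rw [hη, ← Even.pow_abs (even_two_mul m), abs_mul, hσ, one_mul, abs_of_nonneg (by positivity),
      mul_pow, ← Real.rpow_natCast (t^_), ← Real.rpow_mul ht0]
    push_cast
    rw [one_div_mul_cancel (by positivity), Real.rpow_one]
  have hexp : ρ * η + C * η^(2*m) ≤ D + -(t^(1 + 1/(2*(m:ℝ)))) := by
    have h1 := hD t ht0
    have h2 : ρ * η = -2 * t^(1 + 1/(2*(m:ℝ))) := by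
      rw [hs, hη, ← mul_assoc, hσ']; ring
    rw [h2, hpow]
    linarith
  have hbd : ‖∫ r : ℝ, auxG m ρ (r:ℂ)‖ ≤ Real.exp (ρ * η + C * η^(2*m)) * J := by
    rw [auxG_shift m hm ρ η, hJ, ← integral_const_mul]
    exact norm_integral_le_of_norm_le ((aux_int m hm).const_mul _)
      (Filter.Eventually.of_forall fun r => auxG_norm m C hC ρ r η)
  rw [phiFT_eq, norm_mul]
  calc _ ≤ ‖(1 / (2 * Real.pi) : ℂ)‖ * (Real.exp (D + -(t^(1 + 1/(2*(m:ℝ))))) * J) := by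
        gcongr
        refine hbd.trans ?_
        gcongr
    _ = (‖(1 / (2 * Real.pi) : ℂ)‖ * Real.exp D * J) * Real.exp (-(t^(1 + 1/(2*(m:ℝ))))) := by
        rw [Real.exp_add]; ring
    _ ≤ _ := by
        gcongr
        linarith

lemma phiFT_cont (m : ℕ) (hm : 0 < m) : Continuous (phiFT m) := by
  obtain ⟨C, hC0, hC⟩ := aux_re m
  have : phiFT m = fun ρ => (1 / (2 * Real.pi)) * ∫ r : ℝ, auxG m ρ (r:ℂ) := by
    ext ρ; exact phiFT_eq m ρ
  rw [this]
  refine continuous_const.mul ?_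
  refine continuous_of_dominated (bound := fun r => Real.exp (-(r^(2*m)/2))) ?_ ?_ (aux_int m hm) ?_
  · intro ρ
    exact ((auxG_cont m ρ).comp (by fun_prop)).aestronglyMeasurable
  · intro ρ
    refine Filter.Eventually.of_forall fun r => ?_
    have := auxG_norm m C hC ρ r 0
    simpa [hm.ne'] using this
  · refine Filter.Eventually.of_forall fun r => ?_
    unfold auxG
    fun_prop

theorem stmt3 (N m : ℕ) (hN : 0 < N) (hm : 0 < m)
    (p : MvPolynomial (Fin N) ℝ) (hdeg : p.totalDegree = 2 * m)
    (M : ℝ) (hM : 0 ≤ M) (hPbound : ∀ x : Fin N → ℝ, -M ≤ MvPolynomial.eval x p)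
    (K : Matrix (Fin N) (Fin N) ℝ) (hK : K.PosDef) :
    Integrable (fun xρ : (Fin N → ℝ) × ℝ =>
        Complex.exp (-((xρ.1 ⬝ᵥ K *ᵥ xρ.1 : ℝ) : ℂ)) * phiFT m xρ.2 *
          Complex.exp (Complex.I * (xρ.2 : ℂ) *
            (((MvPolynomial.eval xρ.1 p + M) ^ ((1 : ℝ) / (2 * m)) : ℝ) : ℂ))) ∧
      ∃ C > 0, ∀ (x : Fin N → ℝ) (ρ : ℝ),
        ‖Complex.exp (-((x ⬝ᵥ K *ᵥ x : ℝ) : ℂ)) * phiFT m ρ *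
            Complex.exp (Complex.I * (ρ : ℂ) *
              (((MvPolynomial.eval x p + M) ^ ((1 : ℝ) / (2 * m)) : ℝ) : ℂ))‖ ≤
          C * Real.exp (-(|ρ| ^ (1 + 1 / (2 * (m : ℝ)))) - x ⬝ᵥ K *ᵥ x) := by
  have hm' : (0:ℝ) < m := by exact_mod_cast hm
  obtain ⟨C, hC, hb⟩ := phiFT_bound m hm
  have key : ∀ (x : Fin N → ℝ) (ρ : ℝ),
        ‖Complex.exp (-((x ⬝ᵥ K *ᵥ x : ℝ) : ℂ)) * phiFT m ρ *
            Complex.exp (Complex.I * (ρ : ℂ) *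
              (((MvPolynomial.eval x p + M) ^ ((1 : ℝ) / (2 * m)) : ℝ) : ℂ))‖ ≤
          C * Real.exp (-(|ρ| ^ (1 + 1 / (2 * (m : ℝ)))) - x ⬝ᵥ K *ᵥ x) := by
    intro x ρ
    generalize (MvPolynomial.eval x p + M) ^ ((1 : ℝ) / (2 * m)) = q
    generalize x ⬝ᵥ K *ᵥ x = k
    have h1 : ‖Complex.exp (Complex.I * (ρ : ℂ) * (q : ℂ))‖ = 1 := by
      rw [Complex.norm_exp]; simp
    have h2 : ‖Complex.exp (-(k : ℂ))‖ = Real.exp (-k) := by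
      rw [Complex.norm_exp]; simp
    rw [norm_mul, norm_mul, h1, h2, mul_one, sub_eq_add_neg, Real.exp_add, ← mul_assoc,
      mul_comm (Real.exp (-k))]
    gcongr
    exact hb ρ
  refine ⟨?_, C, hC, key⟩
  have hdom : Integrable (fun xρ : (Fin N → ℝ) × ℝ =>
      C * Real.exp (-(|xρ.2| ^ (1 + 1 / (2 * (m : ℝ)))) - xρ.1 ⬝ᵥ K *ᵥ xρ.1)) := by
    have h := (Integrable.mul_prod (aux_quad_int N hN K hK)
      (aux_rho_int (1 + 1 / (2 * (m : ℝ))) (by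
        have : 0 ≤ 1 / (2 * (m : ℝ)) := by positivity
        linarith))).const_mul C
    refine h.congr (Filter.Eventually.of_forall fun z => ?_)
    simp only
    rw [← Real.exp_add]
    congr 2
    ring
  refine hdom.mono' ?_ (Filter.Eventually.of_forall fun z => key z.1 z.2)
  have c1 := phiFT_cont m hm
  have c2 : Continuous (fun z : (Fin N → ℝ) × ℝ =>
      (MvPolynomial.eval z.1 p + M) ^ ((1 : ℝ) / (2 * m))) := by
    have c3 : Continuous (fun z : (Fin N → ℝ) × ℝ => MvPolynomial.eval z.1 p + M) :=
      ((MvPolynomial.continuous_eval p).comp continuous_fst).add continuous_const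
    exact c3.rpow_const (fun _ => Or.inr (by positivity))
  have c4 : Continuous (fun z : (Fin N → ℝ) × ℝ => z.1 ⬝ᵥ K *ᵥ z.1) := by fun_prop
  refine Continuous.aestronglyMeasurable ?_
  fun_prop
end

section
/- For every positive integer m, every R > 0 and every nonnegative integer n, the coefficient A_n(m, R) := i^n ∫_{-R}^{R} φ_m(ρ) ρ^n dρ satisfies A_n(m, R) = (1/π) ∫_ℝ ( d^n/dr^n e^{-r^{2m}} ) · (sin(Rr)/r) dr; in particular A_n(m, R) is real. -/
open MeasureTheory

/-- The coefficient `A_n(m, R) := iⁿ ∫_{-R}^{R} φ_m(ρ) ρⁿ dρ`. -/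
noncomputable def coeffA (m : ℕ) (R : ℝ) (n : ℕ) : ℂ :=
  Complex.I ^ n * ∫ ρ in (-R)..R, phiFT m ρ * (ρ : ℂ) ^ n

noncomputable def qpoly (m : ℕ) : ℕ → Polynomial ℝ
  | 0 => 1
  | n + 1 => Polynomial.derivative (qpoly m n)
      - Polynomial.C ((2 * m : ℕ) : ℝ) * Polynomial.X ^ (2 * m - 1) * qpoly m n

lemma hasDerivAt_f (m n : ℕ) (r : ℝ) :
    HasDerivAt (fun s : ℝ => (qpoly m n).eval s * Real.exp (-(s ^ (2 * m))))
      ((qpoly m (n+1)).eval r * Real.exp (-(r ^ (2 * m)))) r := by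
  have h := ((qpoly m n).hasDerivAt r).mul ((hasDerivAt_pow (2 * m) r).neg.exp)
  refine h.congr_deriv ?_
  simp only [qpoly, Polynomial.eval_sub, Polynomial.eval_mul, Polynomial.eval_C,
    Polynomial.eval_pow, Polynomial.eval_X, Pi.neg_apply]
  ring

lemma iterD (m n : ℕ) : iteratedDeriv n (fun s : ℝ => Real.exp (-(s ^ (2 * m)))) =
    fun s : ℝ => (qpoly m n).eval s * Real.exp (-(s ^ (2 * m))) := by
  induction n with
  | zero => simp [qpoly]
  | succ n ih =>
    rw [iteratedDeriv_succ, ih]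
    funext r
    exact (hasDerivAt_f m n r).deriv

lemma integ_mono (m : ℕ) (hm : 0 < m) (k : ℕ) :
    Integrable (fun r : ℝ => r ^ k * Real.exp (-(r ^ (2 * m)))) := by
  have h := (integrable_rpow_mul_exp_neg_mul_sq (b := (m : ℝ)) (by exact_mod_cast hm)
    (s := (k : ℝ)) (by have : (0:ℝ) ≤ k := k.cast_nonneg
                       linarith)).norm.const_mul (Real.exp (m - 1))
  refine h.mono' (by fun_prop) (Filter.Eventually.of_forall fun r => ?_)
  have hb := one_add_mul_le_pow (a := r ^ 2 - 1) (by nlinarith [sq_nonneg r]) m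
  rw [norm_mul, norm_mul, Real.rpow_natCast, mul_left_comm]
  gcongr
  rw [Real.norm_of_nonneg (Real.exp_pos _).le, Real.norm_of_nonneg (Real.exp_pos _).le,
    ← Real.exp_add]
  gcongr
  rw [pow_mul]
  have e : (1 + (r ^ 2 - 1)) = r ^ 2 := by ring
  rw [e] at hb
  linarith

lemma integ_poly (m : ℕ) (hm : 0 < m) (p : Polynomial ℝ) :
    Integrable (fun r : ℝ => p.eval r * Real.exp (-(r ^ (2 * m)))) := by
  simp only [Polynomial.eval_eq_sum_range, Finset.sum_mul]
  refine integrable_finsetSum _ fun i _ => ?_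
  simpa only [mul_assoc] using (integ_mono m hm i).const_mul (p.coeff i)

lemma integ_exp (m : ℕ) (hm : 0 < m) (p : Polynomial ℝ) (ρ : ℝ) :
    Integrable (fun r : ℝ => Complex.exp (-(Complex.I * (ρ : ℂ) * (r : ℂ))) *
      ((p.eval r * Real.exp (-(r ^ (2 * m))) : ℝ) : ℂ)) := by
  refine (integ_poly m hm p).norm.mono' ?_ (Filter.Eventually.of_forall fun r => ?_)
  · have : Continuous fun r : ℝ => p.eval r := p.continuous
    apply Continuous.aestronglyMeasurable
    fun_prop
  · have e : (-(Complex.I * (ρ : ℂ) * (r : ℂ))) = ((-(ρ * r) : ℝ) : ℂ) * Complex.I := by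
      push_cast; ring
    rw [norm_mul, e, Complex.norm_exp_ofReal_mul_I, one_mul, Complex.norm_real]

lemma ibp (m : ℕ) (hm : 0 < m) (n : ℕ) (ρ : ℝ) :
    ∫ r : ℝ, Complex.exp (-(Complex.I * (ρ : ℂ) * (r : ℂ))) *
      (((qpoly m (n+1)).eval r * Real.exp (-(r ^ (2 * m))) : ℝ) : ℂ) =
    Complex.I * ρ * ∫ r : ℝ, Complex.exp (-(Complex.I * (ρ : ℂ) * (r : ℂ))) *
      (((qpoly m n).eval r * Real.exp (-(r ^ (2 * m))) : ℝ) : ℂ) := by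
  have hu : ∀ r : ℝ, HasDerivAt (fun r : ℝ => Complex.exp (-(Complex.I * (ρ : ℂ) * (r : ℂ))))
      (-(Complex.I * ρ) * Complex.exp (-(Complex.I * (ρ : ℂ) * (r : ℂ)))) r := by
    intro r
    have h := (((hasDerivAt_id r).ofReal_comp.const_mul (Complex.I * (ρ : ℂ))).neg).cexp
    refine h.congr_deriv ?_
    simp
    ring
  have hv := fun r : ℝ => (hasDerivAt_f m n r).ofReal_comp
  have key := integral_mul_deriv_eq_deriv_mul_of_integrable (fun r _ => hu r) (fun r _ => hv r)
    (integ_exp m hm _ ρ) (by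
      have := (integ_exp m hm (qpoly m n) ρ).const_mul (-(Complex.I * ρ))
      simpa only [mul_assoc, Pi.mul_def] using this) (integ_exp m hm _ ρ)
  rw [key, ← integral_const_mul, ← integral_neg]
  congr 1
  funext r
  ring

lemma ibpn (m : ℕ) (hm : 0 < m) (n : ℕ) (ρ : ℝ) :
    ∫ r : ℝ, Complex.exp (-(Complex.I * (ρ : ℂ) * (r : ℂ))) *
      (((qpoly m n).eval r * Real.exp (-(r ^ (2 * m))) : ℝ) : ℂ) =
    (Complex.I * ρ) ^ n * ∫ r : ℝ, Complex.exp (-(Complex.I * (ρ : ℂ) * (r : ℂ))) *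
      (Real.exp (-(r ^ (2 * m))) : ℂ) := by
  induction n with
  | zero => simp [qpoly]
  | succ n ih => rw [ibp m hm, ih]; ring

lemma inner_int (R r : ℝ) :
    ∫ ρ in (-R)..R, Complex.exp (-(Complex.I * (ρ : ℂ) * (r : ℂ))) =
      ((2 * (if r = 0 then R else Real.sin (R * r) / r) : ℝ) : ℂ) := by
  split_ifs with h
  · subst h
    simp
    ring
  · have hc : -(Complex.I * (r : ℂ)) ≠ 0 := by simp [h]
    have := integral_exp_mul_complex (a := -R) (b := R) hc
    have e : ∀ ρ : ℝ, -(Complex.I * (ρ : ℂ) * (r : ℂ)) = -(Complex.I * (r : ℂ)) * ρ := by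
      intro ρ; ring
    simp only [e, this]
    have hr : (r : ℂ) ≠ 0 := by exact_mod_cast h
    have e1 : -(Complex.I * (r : ℂ)) * (R : ℂ) = (-((R : ℂ) * r)) * Complex.I := by ring
    have e2 : -(Complex.I * (r : ℂ)) * ((-R : ℝ) : ℂ) = (((R : ℂ) * r)) * Complex.I := by
      push_cast; ring
    rw [e1, e2]
    push_cast
    rw [Complex.sin]
    field_simp
    rw [Complex.I_sq]
    ring

theorem stmt10 (m : ℕ) (hm : 0 < m) (R : ℝ) (hR : 0 < R) (n : ℕ) :
    coeffA m R n =
      (((1 / Real.pi) *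
        ∫ r : ℝ, iteratedDeriv n (fun s : ℝ => Real.exp (-(s ^ (2 * m)))) r *
          (if r = 0 then R else Real.sin (R * r) / r) : ℝ) : ℂ) := by
  unfold coeffA phiFT
  rw [iterD, ← intervalIntegral.integral_const_mul]
  have h1 : ∀ ρ : ℝ, Complex.I ^ n * (((1 / (2 * Real.pi)) *
    ∫ r : ℝ, Complex.exp (-(Complex.I * (ρ : ℂ) * (r : ℂ))) * (Real.exp (-(r ^ (2 * m))) : ℂ)) * (ρ : ℂ) ^ n)
      = (1 / (2 * Real.pi)) * ∫ r : ℝ, Complex.exp (-(Complex.I * (ρ : ℂ) * (r : ℂ))) *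
      (((qpoly m n).eval r * Real.exp (-(r ^ (2 * m))) : ℝ) : ℂ) := by
    intro ρ
    rw [ibpn m hm, mul_pow]; ring
  simp only [h1]
  rw [intervalIntegral.integral_const_mul, intervalIntegral.integral_of_le (by linarith),
    integral_integral_swap]
  · have h2 : ∀ r : ℝ, ∫ ρ in Set.Ioc (-R) R, Complex.exp (-(Complex.I * (ρ : ℂ) * (r : ℂ))) *
      (((qpoly m n).eval r * Real.exp (-(r ^ (2 * m))) : ℝ) : ℂ) =
      ((2 * ((qpoly m n).eval r * Real.exp (-(r ^ (2 * m))) *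
        (if r = 0 then R else Real.sin (R * r) / r)) : ℝ) : ℂ) := by
      intro r
      rw [integral_mul_const, ← intervalIntegral.integral_of_le (by linarith), inner_int]
      push_cast; ring
    simp only [h2]
    rw [integral_complex_ofReal, integral_const_mul]
    push_cast
    have : (Real.pi : ℂ) ≠ 0 := by exact_mod_cast Real.pi_ne_zero
    field_simp
    simp only [mul_comm R]
  · have hi : Integrable (fun _ : ℝ => (1:ℝ)) (volume.restrict (Set.Ioc (-R) R)) :=
      integrable_const _
    refine (hi.mul_prod (integ_poly m hm (qpoly m n)).norm).mono' ?_
      (Filter.Eventually.of_forall fun z => ?_)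
    · have : Continuous fun r : ℝ => (qpoly m n).eval r := (qpoly m n).continuous
      apply Continuous.aestronglyMeasurable
      simp only [Function.uncurry_def]
      fun_prop
    · have e : (-(Complex.I * (z.1 : ℂ) * (z.2 : ℂ))) = ((-(z.1 * z.2) : ℝ) : ℂ) * Complex.I := by
        push_cast; ring
      simp only [Function.uncurry_def]
      rw [norm_mul, e, Complex.norm_exp_ofReal_mul_I, Complex.norm_real]
end
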